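/- Let T = {γ ∈ ℝ^n : γ_i < 0 for all i, Σ_{i=1}^n γ_i > −1} and f(γ) = ½ Σ_{i=1}^n γ_i log(−γ_i) − ½ (1 + Σ_{j=1}^n γ_j) log(1 + Σ_{j=1}^n γ_j). Then for every s ∈ ∂T = closure(T) \ T there exists δ > 0 such that for all γ ∈ T with ∇f(γ) ≠ 0 and all real numbers t₁, t₂ with 0 ≤ t₁ ≤ t₂ < δ, one has s + t₁ · ∇f(γ)/‖∇f(γ)‖ ≠ γ + t₂ · ∇f(γ)/‖∇f(γ)‖ in ℝ^n. -/

import Mathlib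

open scoped BigOperators

/-- The open cell `T = {γ ∈ ℝⁿ : γᵢ < 0, ∑ γᵢ > −1}`, inside Euclidean space. -/
def openCellT (n : ℕ) : Set (EuclideanSpace ℝ (Fin n)) :=
  {γ | (∀ i, γ i < 0) ∧ -1 < ∑ i, γ i}

/-- The potential `f` of the T-dual Lagrangian `L(O(−1), h_{−1})`. -/
noncomputable def potentialF (n : ℕ) (γ : EuclideanSpace ℝ (Fin n)) : ℝ :=
  (1 / 2) * ∑ i, γ i * Real.log (-γ i)
    - (1 / 2) * (1 + ∑ j, γ j) * Real.log (1 + ∑ j, γ j)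

/-!
Use the barycentric coordinates `-γ i` and `1 + ∑ j, γ j`, all of which are positive exactly on
`T`. Since `∂f/∂γᵢ = ½ (log (-γ i) - log (1 + ∑ j, γ j))`, moving along the gradient shrinks every
`-γ i` that exceeds `1 + ∑ j, γ j` and enlarges every one that is smaller. For a point to leave `T`
in this way, some `-γ i` must overtake `1 + ∑ j, γ j` or be overtaken by it. By continuity, strict
comparisons that hold at `s` persist near `s`, so no point of `T` close to `s` can be carried to
`s`.
-/

open Filter Topology
open scoped Gradient

lemma eventually_forall_lt_of_lt {X α ι : Type*} [TopologicalSpace X] [TopologicalSpace α]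
    [LinearOrder α] [OrderClosedTopology α] [Finite ι] {f g : ι → X → α} {x : X}
    (hf : ∀ i, ContinuousAt (f i) x) (hg : ∀ i, ContinuousAt (g i) x) :
    ∀ᶠ y in 𝓝 x, ∀ i, f i x < g i x → f i y < g i y :=
  eventually_all.2 fun i => eventually_imp_distrib_left.2 ((hf i).eventually_lt (hg i))

section Cell

variable {n : ℕ} {γ s : EuclideanSpace ℝ (Fin n)}

lemma mem_openCellT_of_barycentric_le (hγ : γ ∈ openCellT n)
    (hincr : ∀ i, γ i < s i → 1 + ∑ j, s j ≤ -s i)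
    (hdecr : ∀ i, s i < γ i → -s i ≤ 1 + ∑ j, s j) : s ∈ openCellT n := by
  obtain ⟨hγneg, hγsum⟩ := hγ
  have hsum : -1 < ∑ j, s j := by
    by_contra! hle
    obtain ⟨i, -, hi⟩ := Finset.exists_lt_of_sum_lt (hle.trans_lt hγsum)
    linarith [hdecr i hi, hγneg i]
  refine ⟨fun i => ?_, hsum⟩
  by_contra! hi
  linarith [hincr i ((hγneg i).trans_le hi)]

lemma hasGradientAt_potentialF (hγ : ∀ i, γ i ≠ 0) (hsum : 1 + ∑ j, γ j ≠ 0) :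
    HasGradientAt (potentialF n)
      (WithLp.toLp 2 fun i => 1 / 2 * (Real.log (-γ i) - Real.log (1 + ∑ j, γ j))) γ := by
  have hcoord (i : Fin n) : HasFDerivAt (fun x : EuclideanSpace ℝ (Fin n) => x i)
      (EuclideanSpace.proj i : EuclideanSpace ℝ (Fin n) →L[ℝ] ℝ) γ :=
    (EuclideanSpace.proj i : EuclideanSpace ℝ (Fin n) →L[ℝ] ℝ).hasFDerivAt
  -- `Real.log` is even, so `γ i * log (-γ i)` may be differentiated as `γ i * log (γ i)`.
  have hentropy := HasFDerivAt.fun_sum (u := Finset.univ) fun i _ =>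
    (Real.hasDerivAt_mul_log (hγ i)).comp_hasFDerivAt γ (hcoord i)
  have hslack := (Real.hasDerivAt_mul_log hsum).comp_hasFDerivAt γ
    ((HasFDerivAt.fun_sum (u := Finset.univ) fun i _ => hcoord i).const_add 1)
  rw [hasGradientAt_iff_hasFDerivAt]
  refine (((hentropy.const_mul (1 / 2)).sub (hslack.const_mul (1 / 2))).congr_fderiv ?_)
    |>.congr_of_eventuallyEq ?_
  · ext v
    simp only [sub_apply, smul_apply, sum_apply, PiLp.proj_apply, smul_eq_mul,
      InnerProductSpace.toDual_apply_apply, PiLp.inner_apply, RCLike.inner_apply, conj_trivial,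
      Real.log_neg_eq_log, Finset.mul_sum, ← Finset.sum_sub_distrib]
    exact Finset.sum_congr rfl fun i _ => by ring
  · refine .of_eq ?_
    ext x
    simp [potentialF, mul_assoc]

lemma gradient_potentialF_apply (hγ : γ ∈ openCellT n) (i : Fin n) :
    ∇ (potentialF n) γ i = 1 / 2 * (Real.log (-γ i) - Real.log (1 + ∑ j, γ j)) := by
  have hsum : 1 + ∑ j, γ j ≠ 0 := by linarith [hγ.2]
  rw [(hasGradientAt_potentialF (fun i => (hγ.1 i).ne) hsum).gradient]

lemma gradient_potentialF_apply_pos_iff (hγ : γ ∈ openCellT n) (i : Fin n) :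
    0 < ∇ (potentialF n) γ i ↔ 1 + ∑ j, γ j < -γ i := by
  rw [gradient_potentialF_apply hγ, mul_pos_iff_of_pos_left one_half_pos, sub_pos,
    Real.log_lt_log_iff (by linarith [hγ.2]) (neg_pos.2 (hγ.1 i))]

lemma gradient_potentialF_apply_neg_iff (hγ : γ ∈ openCellT n) (i : Fin n) :
    ∇ (potentialF n) γ i < 0 ↔ -γ i < 1 + ∑ j, γ j := by
  rw [gradient_potentialF_apply hγ, ← smul_eq_mul, smul_neg_iff_of_pos_left one_half_pos, sub_neg,
    Real.log_lt_log_iff (neg_pos.2 (hγ.1 i)) (by linarith [hγ.2])]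

lemma eventually_ne_add_smul_gradient_potentialF (hs : s ∉ openCellT n) :
    ∀ᶠ γ in 𝓝 s, γ ∈ openCellT n → ∀ c : ℝ, 0 ≤ c → s ≠ γ + c • ∇ (potentialF n) γ := by
  have hslack : ContinuousAt (fun γ : EuclideanSpace ℝ (Fin n) => 1 + ∑ j, γ j) s := by fun_prop
  have hneg_coord (i : Fin n) :
      ContinuousAt (fun γ : EuclideanSpace ℝ (Fin n) => -γ i) s := by fun_prop
  have hslack_lt : ∀ᶠ γ in 𝓝 s, ∀ i, 1 + ∑ j, s j < -s i → 1 + ∑ j, γ j < -γ i :=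
    eventually_forall_lt_of_lt (fun _ => hslack) hneg_coord
  have hlt_slack : ∀ᶠ γ in 𝓝 s, ∀ i, -s i < 1 + ∑ j, s j → -γ i < 1 + ∑ j, γ j :=
    eventually_forall_lt_of_lt hneg_coord fun _ => hslack
  filter_upwards [hslack_lt, hlt_slack] with γ hγ_slack_lt hγ_lt_slack hγ c hc hsγ
  have hcoord (i : Fin n) : s i = γ i + c * ∇ (potentialF n) γ i :=
    congrArg (fun x : EuclideanSpace ℝ (Fin n) => x i) hsγ
  refine hs (mem_openCellT_of_barycentric_le hγ (fun i hi => ?_) fun i hi => ?_)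
  · have hpos : 0 < ∇ (potentialF n) γ i :=
      pos_of_mul_pos_right (by linarith [hcoord i]) hc
    exact le_of_not_gt fun h =>
      ((gradient_potentialF_apply_pos_iff hγ i).1 hpos).not_gt (hγ_lt_slack i h)
  · have hneg : ∇ (potentialF n) γ i < 0 :=
      neg_of_mul_neg_right (by linarith [hcoord i]) hc
    exact le_of_not_gt fun h =>
      ((gradient_potentialF_apply_neg_iff hγ i).1 hneg).not_gt (hγ_slack_lt i h)

end Cell

theorem stmt_10_general (n : ℕ) :
    ∀ s ∉ openCellT n,
      ∃ δ : ℝ, 0 < δ ∧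
        ∀ γ ∈ openCellT n, ∇ (potentialF n) γ ≠ 0 →
          ∀ t₁ t₂ : ℝ, t₁ ≤ t₂ → t₂ - t₁ < δ →
            s + t₁ • (‖∇ (potentialF n) γ‖⁻¹ • ∇ (potentialF n) γ) ≠
              γ + t₂ • (‖∇ (potentialF n) γ‖⁻¹ • ∇ (potentialF n) γ) := by
  intro s hs
  obtain ⟨δ, hδ, hball⟩ :=
    Metric.eventually_nhds_iff.1 (eventually_ne_add_smul_gradient_potentialF hs)
  refine ⟨δ, hδ, fun γ hγ hgrad t₁ t₂ ht htδ heq => ?_⟩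
  have ht_sub : 0 ≤ t₂ - t₁ := sub_nonneg.2 ht
  set v := ∇ (potentialF n) γ
  have hsγ : s = γ + (t₂ - t₁) • (‖v‖⁻¹ • v) := by
    rw [sub_smul, ← add_sub_assoc, ← heq, add_sub_cancel_right]
  have hunit : ‖‖v‖⁻¹ • v‖ = 1 := norm_smul_inv_norm (𝕜 := ℝ) hgrad
  have hdist : dist γ s < δ := by
    rwa [hsγ, dist_self_add_right, norm_smul, hunit, mul_one, Real.norm_of_nonneg ht_sub]
  exact hball hdist hγ ((t₂ - t₁) * ‖v‖⁻¹) (by positivity) (by rwa [mul_smul])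

theorem stmt_10 (n : ℕ) (hn : 1 ≤ n) :
    ∀ s ∈ closure (openCellT n) \ openCellT n,
      ∃ δ : ℝ, 0 < δ ∧
        ∀ γ ∈ openCellT n, gradient (potentialF n) γ ≠ 0 →
          ∀ t₁ t₂ : ℝ, 0 ≤ t₁ → t₁ ≤ t₂ → t₂ < δ →
            s + t₁ • (‖gradient (potentialF n) γ‖⁻¹ • gradient (potentialF n) γ) ≠
              γ + t₂ • (‖gradient (potentialF n) γ‖⁻¹ • gradient (potentialF n) γ) := by
  intro s hs
  obtain ⟨δ, hδ, h⟩ := stmt_10_general n s hs.2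
  exact ⟨δ, hδ, fun γ hγ hgrad t₁ t₂ ht₁ ht ht₂ => h γ hγ hgrad t₁ t₂ ht (by linarith)⟩
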